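/- Let z₀, γ₀ ∈ 𝔻 and γ₁, γ₂ ∈ 𝔻. Let f ∈ ℋ satisfy f(z₀) = γ₀, H¹f(z₀) = γ₁ and H²f(z₀) = γ₂. Then there exists f* ∈ 𝒮 such that f(z) = T_{γ₀}(T_{−z₀}(z)·T_{γ₁}(T_{−z₀}(z)·T_{γ₂}(T_{−z₀}(z)·f*(z)))) for all z ∈ 𝔻. -/

import Mathlib

open Complex Metric

/-- `ℋ`: analytic self-maps of the open unit disk. -/
def Hclass (f : ℂ → ℂ) : Prop :=
  DifferentiableOn ℂ f (ball (0 : ℂ) 1) ∧ Set.MapsTo f (ball (0 : ℂ) 1) (ball (0 : ℂ) 1)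

/-- `𝒮`: analytic maps of the open unit disk into the closed unit disk. -/
def Sclass (f : ℂ → ℂ) : Prop :=
  DifferentiableOn ℂ f (ball (0 : ℂ) 1) ∧ Set.MapsTo f (ball (0 : ℂ) 1) (closedBall (0 : ℂ) 1)

/-- The Möbius transformation `T_a(z) = (z + a)/(1 + conj(a) z)`. -/
noncomputable def T (a z : ℂ) : ℂ := (z + a) / (1 + (starRingEnd ℂ) a * z)

/-- The (first-order) hyperbolic derivative `H¹f(z) = (1-|z|²)f'(z)/(1-|f(z)|²)`. -/
noncomputable def H1 (f : ℂ → ℂ) (z : ℂ) : ℂ :=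
  ((1 - ‖z‖ ^ 2 : ℝ) : ℂ) * deriv f z / ((1 - ‖f z‖ ^ 2 : ℝ) : ℂ)

/-- The second Peschl invariant derivative `D₂f(z)`. -/
noncomputable def D2 (f : ℂ → ℂ) (z : ℂ) : ℂ :=
  ((1 - ‖z‖ ^ 2 : ℝ) : ℂ) ^ 2 / ((1 - ‖f z‖ ^ 2 : ℝ) : ℂ) *
    (iteratedDeriv 2 f z - 2 * (starRingEnd ℂ) z * deriv f z / ((1 - ‖z‖ ^ 2 : ℝ) : ℂ) +
      2 * (starRingEnd ℂ) (f z) * (deriv f z) ^ 2 / ((1 - ‖f z‖ ^ 2 : ℝ) : ℂ))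

/-- The second-order hyperbolic derivative `H²f(z) = D₂f(z)/(2(1-|H¹f(z)|²))`. -/
noncomputable def H2 (f : ℂ → ℂ) (z : ℂ) : ℂ :=
  D2 f z / (2 * ((1 - ‖H1 f z‖ ^ 2 : ℝ) : ℂ))

lemma T_den_ne {a z : ℂ} (ha : a ∈ ball (0 : ℂ) 1) (hz : z ∈ ball (0 : ℂ) 1) :
    1 + (starRingEnd ℂ) a * z ≠ 0 := by
  intro h
  rw [mem_ball_zero_iff] at ha hz
  have h1 : (starRingEnd ℂ) a * z = -1 := by linear_combination h
  have h2 : ‖a‖ * ‖z‖ = 1 := by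
    have := congrArg norm h1
    simpa using this
  nlinarith [norm_nonneg a, norm_nonneg z]

lemma T_mem {a z : ℂ} (ha : a ∈ ball (0 : ℂ) 1) (hz : z ∈ ball (0 : ℂ) 1) :
    T a z ∈ ball (0 : ℂ) 1 := by
  have hd := T_den_ne ha hz
  rw [mem_ball_zero_iff] at *
  unfold T
  rw [norm_div, div_lt_one (norm_pos_iff.mpr hd)]
  apply lt_of_pow_lt_pow_left₀ 2 (norm_nonneg _)
  have ha2 : ‖a‖ ^ 2 < 1 := by nlinarith [norm_nonneg a]
  have hz2 : ‖z‖ ^ 2 < 1 := by nlinarith [norm_nonneg z]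
  rw [← Complex.normSq_eq_norm_sq, Complex.normSq_apply] at *
  rw [← Complex.normSq_eq_norm_sq, Complex.normSq_apply] at *
  simp at *
  nlinarith [mul_pos (sub_pos.mpr ha2) (sub_pos.mpr hz2)]

lemma neg_mem {a : ℂ} (ha : a ∈ ball (0 : ℂ) 1) : -a ∈ ball (0 : ℂ) 1 := by
  simpa using ha

lemma one_sub_ne {a : ℂ} (ha : a ∈ ball (0 : ℂ) 1) : 1 - (starRingEnd ℂ) a * a ≠ 0 := by
  have := T_den_ne (neg_mem ha) ha
  simpa [sub_eq_add_neg] using this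

lemma T_inv {a z : ℂ} (ha : a ∈ ball (0 : ℂ) 1) (hz : z ∈ ball (0 : ℂ) 1) :
    T a (T (-a) z) = z := by
  have h1 := T_den_ne (neg_mem ha) hz
  have h2 := T_den_ne ha (T_mem (neg_mem ha) hz)
  have h3 : T (-a) z * (1 + (starRingEnd ℂ) (-a) * z) = z + -a := by
    unfold T
    exact div_mul_cancel₀ _ h1
  rw [T, div_eq_iff h2]
  rw [map_neg] at h3
  linear_combination h3

lemma T_diff {a : ℂ} (ha : a ∈ ball (0 : ℂ) 1) : DifferentiableOn ℂ (T a) (ball (0 : ℂ) 1) := by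
  unfold T
  refine DifferentiableOn.div (by fun_prop) (by fun_prop) ?_
  intro z hz
  exact T_den_ne ha hz

lemma step {z₀ c : ℂ} (hz₀ : z₀ ∈ ball (0 : ℂ) 1) (hc : c ∈ ball (0 : ℂ) 1)
    {g : ℂ → ℂ} (hg : Hclass g) (hgz : g z₀ = c) :
    ∃ h : ℂ → ℂ, Sclass h ∧ ∀ z ∈ ball (0 : ℂ) 1, g z = T c (T (-z₀) z * h z) ∧
      (g z - c) * (1 - (starRingEnd ℂ) z₀ * z) = (z - z₀) * (h z * (1 - (starRingEnd ℂ) c * g z)) := by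
  obtain ⟨hgd, hgm⟩ := hg
  have hT0 : Set.MapsTo (T z₀) (ball (0 : ℂ) 1) (ball (0 : ℂ) 1) := fun z hz => T_mem hz₀ hz
  have hTn : Set.MapsTo (T (-z₀)) (ball (0 : ℂ) 1) (ball (0 : ℂ) 1) :=
    fun z hz => T_mem (neg_mem hz₀) hz
  have hTc : Set.MapsTo (T (-c)) (ball (0 : ℂ) 1) (ball (0 : ℂ) 1) :=
    fun z hz => T_mem (neg_mem hc) hz
  set F : ℂ → ℂ := T (-c) ∘ (g ∘ T z₀) with hF
  have hF0 : F 0 = 0 := by simp [hF, T, hgz]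
  have hFd : DifferentiableOn ℂ F (ball (0 : ℂ) 1) :=
    (T_diff (neg_mem hc)).comp (hgd.comp (T_diff hz₀) hT0) (hgm.comp hT0)
  have hFm : Set.MapsTo F (ball (0 : ℂ) 1) (ball (0 : ℂ) 1) := hTc.comp (hgm.comp hT0)
  have hds : DifferentiableOn ℂ (dslope F 0) (ball (0 : ℂ) 1) :=
    (differentiableOn_dslope (isOpen_ball.mem_nhds (by simp))).mpr hFd
  have hbd : ∀ w ∈ ball (0 : ℂ) 1, ‖dslope F 0 w‖ ≤ 1 := by
    intro w hw
    have := Complex.norm_dslope_le_div_of_mapsTo_ball (R₁ := 1) (R₂ := 1) hFd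
      (by rw [hF0]; exact hFm.mono_right ball_subset_closedBall) hw
    simpa using this
  refine ⟨dslope F 0 ∘ T (-z₀), ⟨hds.comp (T_diff (neg_mem hz₀)) hTn, ?_⟩, ?_⟩
  · intro z hz
    rw [mem_closedBall_zero_iff]
    exact hbd _ (hTn hz)
  · intro z hz
    have hp := hTn hz
    have hFp : F (T (-z₀) z) = T (-c) (g z) := by
      simp [hF, T_inv hz₀ hz]
    have hprod : T (-z₀) z * (dslope F 0 ∘ T (-z₀)) z = T (-c) (g z) := by
      have := sub_smul_dslope F 0 (T (-z₀) z)
      rw [hF0, hFp] at this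
      simpa using this
    refine ⟨by rw [hprod, T_inv hc (hgm hz)], ?_⟩
    have d1 := T_den_ne (neg_mem hz₀) hz
    have d2 := T_den_ne (neg_mem hc) (hgm hz)
    have e1 : T (-z₀) z * (1 - (starRingEnd ℂ) z₀ * z) = z - z₀ := by
      unfold T
      rw [div_mul_eq_mul_div, div_eq_iff d1]; simp; ring
    have e2 : T (-c) (g z) * (1 - (starRingEnd ℂ) c * g z) = g z - c := by
      unfold T
      rw [div_mul_eq_mul_div, div_eq_iff d2]; simp; ring
    rw [← e1, ← e2, ← hprod]
    ring

lemma deriv_unique {u v : ℂ → ℂ} {u' v' z : ℂ} (hz : z ∈ ball (0 : ℂ) 1)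
    (h : ∀ w ∈ ball (0 : ℂ) 1, u w = v w) (hu : HasDerivAt u u' z) (hv : HasDerivAt v v' z) :
    u' = v' := by
  refine hu.unique (hv.congr_of_eventuallyEq ?_)
  filter_upwards [isOpen_ball.mem_nhds hz] with w hw using h w hw

lemma S_to_H {h : ℂ → ℂ} {z₀ : ℂ} (hz₀ : z₀ ∈ ball (0 : ℂ) 1) (hh : Sclass h)
    (h0 : h z₀ ∈ ball (0 : ℂ) 1) : Hclass h := by
  refine ⟨hh.1, fun z hz => ?_⟩
  by_contra hcon
  rw [mem_ball_zero_iff] at h0 hcon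
  have hmax : IsMaxOn (norm ∘ h) (ball (0 : ℂ) 1) z := by
    intro w hw
    have := mem_closedBall_zero_iff.mp (hh.2 hw)
    simp only [Set.mem_ofPred_eq, Function.comp]
    linarith [not_lt.mp hcon]
  have := Complex.norm_eqOn_of_isPreconnected_of_isMaxOn
    (convex_ball (0 : ℂ) 1).isPreconnected isOpen_ball hh.1 hz hmax hz₀
  simp at this
  linarith [not_lt.mp hcon]

/-- The first and second order relations between `g` and its Schur transform `h`. -/
lemma step_derivs {z₀ c : ℂ} (hz₀ : z₀ ∈ ball (0 : ℂ) 1)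
    {g h : ℂ → ℂ} (hg : DifferentiableOn ℂ g (ball (0 : ℂ) 1)) (hgz : g z₀ = c)
    (hh : DifferentiableOn ℂ h (ball (0 : ℂ) 1))
    (he : ∀ z ∈ ball (0 : ℂ) 1, (g z - c) * (1 - (starRingEnd ℂ) z₀ * z) =
      (z - z₀) * (h z * (1 - (starRingEnd ℂ) c * g z))) :
    deriv g z₀ * (1 - (starRingEnd ℂ) z₀ * z₀) = h z₀ * (1 - (starRingEnd ℂ) c * c) ∧
    deriv (deriv g) z₀ * (1 - (starRingEnd ℂ) z₀ * z₀) - 2 * (starRingEnd ℂ) z₀ * deriv g z₀ =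
      2 * (deriv h z₀ * (1 - (starRingEnd ℂ) c * c) - (starRingEnd ℂ) c * deriv g z₀ * h z₀) := by
  have D : ∀ {k : ℂ → ℂ}, DifferentiableOn ℂ k (ball (0 : ℂ) 1) → ∀ z ∈ ball (0 : ℂ) 1,
      HasDerivAt k (deriv k z) z := fun hk z hz =>
    (hk.differentiableAt (isOpen_ball.mem_nhds hz)).hasDerivAt
  have hg' := hg.deriv isOpen_ball
  have hh' := hh.deriv isOpen_ball
  have E1 : ∀ z ∈ ball (0 : ℂ) 1,
      deriv g z * (1 - (starRingEnd ℂ) z₀ * z) + (g z - c) * (-((starRingEnd ℂ) z₀ * 1)) =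
      1 * (h z * (1 - (starRingEnd ℂ) c * g z)) + (z - z₀) * (deriv h z * (1 - (starRingEnd ℂ) c * g z)
        + h z * (-((starRingEnd ℂ) c * deriv g z))) := by
    intro z hz
    exact deriv_unique hz he
      (((D hg z hz).sub_const c).mul (((hasDerivAt_id z).const_mul _).const_sub 1))
      (((hasDerivAt_id z).sub_const z₀).mul
        ((D hh z hz).mul (((D hg z hz).const_mul _).const_sub 1)))
  have E2 := deriv_unique hz₀ E1
      (((D hg' z₀ hz₀).mul (((hasDerivAt_id z₀).const_mul _).const_sub 1)).add
        (((D hg z₀ hz₀).sub_const c).mul_const _))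
      ((((D hh z₀ hz₀).mul (((D hg z₀ hz₀).const_mul _).const_sub 1)).const_mul 1).add
        (((hasDerivAt_id z₀).sub_const z₀).mul
        (((D hh' z₀ hz₀).mul (((D hg z₀ hz₀).const_mul _).const_sub 1)).add
          ((D hh z₀ hz₀).mul (((D hg' z₀ hz₀).const_mul _).neg)))))
  have E1' := E1 z₀ hz₀
  simp only [hgz, sub_self, zero_mul, add_zero, one_mul, id] at E1' E2
  exact ⟨by linear_combination E1', by linear_combination E2⟩

lemma norm_cast_eq (a : ℂ) : ((1 - ‖a‖ ^ 2 : ℝ) : ℂ) = 1 - (starRingEnd ℂ) a * a := by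
  rw [Complex.conj_mul']
  push_cast
  rfl

/-- Any `f ∈ ℋ` with `f(z₀) = γ₀`, `H¹f(z₀) = γ₁`, `H²f(z₀) = γ₂` (with `γ₁, γ₂ ∈ 𝔻`)
has the form `f(z) = T_{γ₀}(T_{-z₀}(z)·T_{γ₁}(T_{-z₀}(z)·T_{γ₂}(T_{-z₀}(z)·f*(z))))`
for some `f* ∈ 𝒮`. -/
theorem schwarz_pick_third_form (z₀ γ₀ γ₁ γ₂ : ℂ)
    (hz₀ : z₀ ∈ ball (0 : ℂ) 1) (hγ₀ : γ₀ ∈ ball (0 : ℂ) 1)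
    (hγ₁ : γ₁ ∈ ball (0 : ℂ) 1) (hγ₂ : γ₂ ∈ ball (0 : ℂ) 1)
    (f : ℂ → ℂ) (hf : Hclass f) (hfz₀ : f z₀ = γ₀)
    (hH1 : H1 f z₀ = γ₁) (hH2 : H2 f z₀ = γ₂) :
    ∃ fstar : ℂ → ℂ, Sclass fstar ∧
      ∀ z ∈ ball (0 : ℂ) 1,
        f z = T γ₀ (T (-z₀) z * T γ₁ (T (-z₀) z * T γ₂ (T (-z₀) z * fstar z))) := by
  obtain ⟨g₁, hg₁S, hg₁⟩ := step hz₀ hγ₀ hf hfz₀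
  obtain ⟨A1, A2⟩ := step_derivs hz₀ hf.1 hfz₀ hg₁S.1 (fun z hz => (hg₁ z hz).2)
  have nz := one_sub_ne hz₀
  have n0 := one_sub_ne hγ₀
  have n1 := one_sub_ne hγ₁
  have B1 : g₁ z₀ = γ₁ := by
    rw [← hH1, H1, hfz₀, norm_cast_eq, norm_cast_eq, eq_div_iff n0]
    linear_combination -A1
  have hg₁H := S_to_H hz₀ hg₁S (B1 ▸ hγ₁)
  obtain ⟨g₂, hg₂S, hg₂⟩ := step hz₀ hγ₁ hg₁H B1
  obtain ⟨C1, -⟩ := step_derivs hz₀ hg₁S.1 B1 hg₂S.1 (fun z hz => (hg₂ z hz).2)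
  have B2 : g₂ z₀ = γ₂ := by
    rw [← hH2, H2, hH1, D2, hfz₀, iteratedDeriv_succ, iteratedDeriv_one]
    simp only [norm_cast_eq]
    rw [B1] at A1 A2
    generalize (starRingEnd ℂ) z₀ = zb at *
    generalize (starRingEnd ℂ) γ₀ = b0 at *
    generalize (starRingEnd ℂ) γ₁ = b1 at *
    have A1' : deriv f z₀ = γ₁ * (1 - b0 * γ₀) / (1 - zb * z₀) := by
      rw [eq_div_iff nz]; exact A1
    have C1' : deriv g₁ z₀ = g₂ z₀ * (1 - b1 * γ₁) / (1 - zb * z₀) := by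
      rw [eq_div_iff nz]; exact C1
    have A2' : deriv (deriv f) z₀ = (2 * zb * deriv f z₀ +
      2 * (deriv g₁ z₀ * (1 - b0 * γ₀) - b0 * deriv f z₀ * γ₁)) / (1 - zb * z₀) := by
      rw [eq_div_iff nz]; linear_combination A2
    rw [A2', C1', A1']
    clear A1 A2 C1 A1' C1' A2' hg₁ hg₂
    generalize 1 - zb * z₀ = Nz at *
    generalize 1 - b0 * γ₀ = N0 at *
    generalize 1 - b1 * γ₁ = N1 at *
    field_simp
    ring
  have hg₂H := S_to_H hz₀ hg₂S (B2 ▸ hγ₂)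
  obtain ⟨g₃, hg₃S, hg₃⟩ := step hz₀ hγ₂ hg₂H B2
  refine ⟨g₃, hg₃S, fun z hz => ?_⟩
  rw [← (hg₃ z hz).1, ← (hg₂ z hz).1, ← (hg₁ z hz).1]
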